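/- arXiv:2305.12942 — 4 statements merged into one kernel-verified Lean document; each statement's English description precedes it below -/
import Mathlib

section
/- Let R be a finite commutative ring with 1 ≠ 0. Then |Z(R)| ≥ ψ_g(Γ(R))² − ψ_g(Γ(R)) + 1, where |Z(R)| is the number of zero-divisors of R (including 0). -/
open Classical

/-- The set of zero-divisors of `R` (including `0`). -/
def zeroDivisorSet (R : Type*) [CommRing R] : Set R :=
  {x : R | ∃ y : R, y ≠ 0 ∧ x * y = 0}

/-- Vertices of the zero-divisor graph: the nonzero zero-divisors of `R`. -/
abbrev ZDV (R : Type*) [CommRing R] : Type _ :=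
  {x : R // x ≠ 0 ∧ ∃ y : R, y ≠ 0 ∧ x * y = 0}

/-- The zero-divisor graph `Γ(R)` of a commutative ring `R`: vertices are the nonzero
zero-divisors, and distinct vertices `x`, `y` are adjacent iff `x * y = 0`. -/
def zdGraph (R : Type*) [CommRing R] : SimpleGraph (ZDV R) where
  Adj a b := a ≠ b ∧ (a : R) * (b : R) = 0
  symm := by
    constructor
    intro a b h
    exact ⟨h.1.symm, by rw [mul_comm]; exact h.2⟩
  loopless := by
    constructor
    intro a h
    exact h.1 rfl

/-- `degIn G S v` is the number of neighbors of `v` lying in `S`. -/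
noncomputable def degIn {V : Type*} (G : SimpleGraph V) (S : Set V) (v : V) : ℕ :=
  Set.ncard {u : V | u ∈ S ∧ G.Adj v u}

/-- `S` is a dominating set: every vertex outside `S` has a neighbor in `S`. -/
def IsDominatingSet {V : Type*} (G : SimpleGraph V) (S : Set V) : Prop :=
  ∀ v ∉ S, ∃ u ∈ S, G.Adj v u

/-- `S` is a defensive alliance: `S` is nonempty and every `v ∈ S` satisfies
`deg_S(v) + 1 ≥ deg_{Sᶜ}(v)`. -/
def IsDefensiveAlliance {V : Type*} (G : SimpleGraph V) (S : Set V) : Prop :=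
  S.Nonempty ∧ ∀ v ∈ S, degIn G Sᶜ v ≤ degIn G S v + 1

/-- A global defensive alliance is a defensive alliance that is also a dominating set. -/
def IsGlobalDefensiveAlliance {V : Type*} (G : SimpleGraph V) (S : Set V) : Prop :=
  IsDefensiveAlliance G S ∧ IsDominatingSet G S

/-- `P` is a partition of the vertex set of `G` into global defensive alliances. -/
def IsGDAPartition {V : Type*} (G : SimpleGraph V) (P : Finset (Set V)) : Prop :=
  (∀ S ∈ P, IsGlobalDefensiveAlliance G S) ∧
  (⋃₀ (P : Set (Set V)) = Set.univ) ∧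
  ((P : Set (Set V)).Pairwise Disjoint)

/-- The global defensive alliance partition number `ψ_g(G)`: the maximum number of parts in
a partition of the vertex set into global defensive alliances. -/
noncomputable def psiG {V : Type*} (G : SimpleGraph V) : ℕ :=
  sSup {n : ℕ | ∃ P : Finset (Set V), IsGDAPartition G P ∧ P.card = n}

/-- `G` is partitionable into global defensive alliances iff `ψ_g(G) ≥ 2`. -/
def PartitionableGDA {V : Type*} (G : SimpleGraph V) : Prop :=
  2 ≤ psiG G

/-- The global defensive alliance number `γ_a(G)`: the minimum cardinality of a global
defensive alliance. -/
noncomputable def gammaA {V : Type*} (G : SimpleGraph V) : ℕ :=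
  sInf {n : ℕ | ∃ S : Set V, IsGlobalDefensiveAlliance G S ∧ S.ncard = n}

/-!
Let `v` belong to a part `S` of a partition into `n` global defensive alliances. Each of the other
`n - 1` parts dominates `v`, and these parts are disjoint, so `v` has at least `n - 1` neighbors
outside `S`. As `S` is a defensive alliance, it contains at least `n - 2` neighbors of `v`, and also
`v` itself, so `|S| ≥ n - 1`. Summing over the parts gives at least `n (n - 1)` vertices, and `0`
is one further zero-divisor.
-/

section DefensiveAlliance

variable {V : Type*} {G : SimpleGraph V} {S T : Set V} {v : V}

theorem degIn_lt_ncard (hS : S.Finite) (hv : v ∈ S) : degIn G S v < S.ncard :=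
  Set.ncard_lt_ncard ⟨fun _ hu => hu.1, fun h => G.irrefl (h hv).2⟩ hS

theorem IsDefensiveAlliance.degIn_compl_le_ncard (hS : IsDefensiveAlliance G S)
    (hfin : S.Finite) (hv : v ∈ S) : degIn G Sᶜ v ≤ S.ncard :=
  (hS.2 v hv).trans (degIn_lt_ncard hfin hv)

theorem card_le_degIn_of_pairwise_disjoint_of_isDominatingSet {Q : Finset (Set V)}
    (hdisj : (Q : Set (Set V)).Pairwise Disjoint) (hdom : ∀ D ∈ Q, IsDominatingSet G D)
    (hv : ∀ D ∈ Q, v ∉ D) (hsub : ∀ D ∈ Q, D ⊆ T) (hfin : (G.neighborSet v).Finite) :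
    Q.card ≤ degIn G T v := by
  have : Nonempty V := ⟨v⟩
  choose! f hfD hfAdj using fun D hD => hdom D hD v (hv D hD)
  have hinj : Set.InjOn f (Q : Set (Set V)) := fun D hD D' hD' heq =>
    hdisj.eq hD hD' <| Set.not_disjoint_iff.2 ⟨f D, hfD D hD, heq ▸ hfD D' hD'⟩
  rw [← Set.ncard_coe_finset]
  exact Set.ncard_le_ncard_of_injOn f (fun D hD => ⟨hsub D hD (hfD D hD), hfAdj D hD⟩) hinj
    (hfin.subset fun _ hu => hu.2)

theorem isGlobalDefensiveAlliance_univ [Nonempty V] :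
    IsGlobalDefensiveAlliance G Set.univ :=
  ⟨⟨Set.univ_nonempty, fun v _ => by simp [degIn]⟩, fun v hv => absurd (Set.mem_univ v) hv⟩

end DefensiveAlliance

section Partition

variable {V : Type*} {G : SimpleGraph V} {P : Finset (Set V)} {S : Set V}

theorem exists_isGDAPartition (G : SimpleGraph V) : ∃ P, IsGDAPartition G P := by
  cases isEmpty_or_nonempty V with
  | inl _ => exact ⟨∅, by simp [IsGDAPartition, Set.univ_eq_empty_iff.2]⟩
  | inr _ => exact ⟨{Set.univ}, by simp [IsGDAPartition, isGlobalDefensiveAlliance_univ]⟩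

namespace IsGDAPartition

theorem card_le_ncard_add_one [Finite V] (hP : IsGDAPartition G P) (hS : S ∈ P) :
    P.card ≤ S.ncard + 1 := by
  obtain ⟨hgda, -, hdisj⟩ := hP
  have halliance : IsDefensiveAlliance G S := (hgda S hS).1
  obtain ⟨v, hv⟩ := halliance.1
  have hdisjS : ∀ D ∈ P.erase S, Disjoint S D := fun D hD =>
    hdisj hS (Finset.mem_of_mem_erase hD) (Finset.ne_of_mem_erase hD).symm
  have hcard : (P.erase S).card ≤ degIn G Sᶜ v :=
    card_le_degIn_of_pairwise_disjoint_of_isDominatingSet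
      (hdisj.mono (Finset.coe_subset.2 (P.erase_subset S)))
      (fun D hD => (hgda D (Finset.mem_of_mem_erase hD)).2)
      (fun D hD => Set.disjoint_left.1 (hdisjS D hD) hv)
      (fun D hD => (hdisjS D hD).subset_compl_left)
      (Set.toFinite _)
  calc
    P.card = (P.erase S).card + 1 := (Finset.card_erase_add_one hS).symm
    _ ≤ degIn G Sᶜ v + 1 := by gcongr
    _ ≤ S.ncard + 1 := by gcongr; exact halliance.degIn_compl_le_ncard S.toFinite hv

theorem sum_ncard [Finite V] (hP : IsGDAPartition G P) : ∑ S ∈ P, S.ncard = Nat.card V := by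
  rw [← finsum_mem_coe_finset,
    ← P.finite_toSet.ncard_biUnion (fun S _ => S.toFinite) hP.2.2, ← Set.sUnion_eq_biUnion,
    hP.2.1, Set.ncard_univ]

theorem card_sq_le [Finite V] (hP : IsGDAPartition G P) :
    P.card ^ 2 ≤ Nat.card V + P.card :=
  calc
    P.card ^ 2 = ∑ _S ∈ P, P.card := by rw [Finset.sum_const, smul_eq_mul, sq]
    _ ≤ ∑ S ∈ P, (S.ncard + 1) := Finset.sum_le_sum fun _ hS => hP.card_le_ncard_add_one hS
    _ = Nat.card V + P.card := by rw [Finset.sum_add_distrib, hP.sum_ncard, Finset.card_eq_sum_ones]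

end IsGDAPartition

theorem exists_isGDAPartition_card_eq_psiG [Finite V] (G : SimpleGraph V) :
    ∃ P, IsGDAPartition G P ∧ P.card = psiG G := by
  have hfin : {P | IsGDAPartition G P}.Finite := Set.toFinite _
  have hne : {P | IsGDAPartition G P}.Nonempty := exists_isGDAPartition G
  exact (hne.image Finset.card).csSup_mem (hfin.image Finset.card)

theorem psiG_sq_le [Finite V] (G : SimpleGraph V) : psiG G ^ 2 ≤ Nat.card V + psiG G := by
  obtain ⟨P, hP, hcard⟩ := exists_isGDAPartition_card_eq_psiG G
  exact hcard ▸ hP.card_sq_le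

end Partition

theorem ncard_zeroDivisorSet (R : Type*) [CommRing R] [Nontrivial R] [Finite (ZDV R)] :
    (zeroDivisorSet R).ncard = Nat.card (ZDV R) + 1 := by
  have hinsert : zeroDivisorSet R = insert 0 (Set.range ((↑) : ZDV R → R)) := by
    ext x
    by_cases hx : x = 0
    · simpa [hx, zeroDivisorSet] using exists_ne (0 : R)
    · simp [hx, zeroDivisorSet]
  have hzero : (0 : R) ∉ Set.range ((↑) : ZDV R → R) := by simp
  rw [hinsert, Set.ncard_insert_of_notMem hzero (Set.finite_range _),
    ← Nat.card_coe_set_eq, Nat.card_range_of_injective Subtype.val_injective]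

/-- For a finite commutative ring `R` with `1 ≠ 0`,
`|Z(R)| ≥ ψ_g(Γ(R))² − ψ_g(Γ(R)) + 1`. -/
theorem stmt0 (R : Type*) [CommRing R] [Finite R] [Nontrivial R] :
    (zeroDivisorSet R).ncard ≥ psiG (zdGraph R) ^ 2 - psiG (zdGraph R) + 1 := by
  have hpsi : psiG (zdGraph R) ^ 2 ≤ Nat.card (ZDV R) + psiG (zdGraph R) :=
    psiG_sq_le (zdGraph R)
  rw [ncard_zeroDivisorSet]
  gcongr
  exact Nat.sub_le_of_le_add hpsi
end

section
/- Let (R, M) be a finite local commutative ring whose maximal ideal M is nilpotent of index 2 (i.e., M ≠ 0 and M² = 0). Then: (1) if |M| is odd, Γ(R) is partitionable into global defensive alliances and ψ_g(Γ(R)) = 2; (2) if |M| is even, Γ(R) is not partitionable into global defensive alliances. -/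
open Classical

/-! When `M² = 0` any two zero-divisors multiply to `0`, so `Γ(R)` is the complete graph on the
`|M| - 1` nonzero elements of `M`. In a complete graph on `n ≥ 1` vertices the global defensive
alliances are exactly the nonempty sets with at least `n / 2` vertices. A partition therefore has
at most two parts, and it can have two only if both contain exactly `n / 2` vertices, that is, only
if `n` is even; conversely, any half of the vertices and its complement then form a partition. -/

section Graph

variable {V : Type*}

theorem isGDAPartition_pair_compl {G : SimpleGraph V} {S : Set V}
    (hS : IsGlobalDefensiveAlliance G S) (hSc : IsGlobalDefensiveAlliance G Sᶜ) :
    IsGDAPartition G {S, Sᶜ} := by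
  refine ⟨by simp [hS, hSc], by simp, ?_⟩
  rw [Finset.coe_pair, Set.pairwise_pair_of_symm]
  exact fun _ => disjoint_compl_right

theorem psiG_le {G : SimpleGraph V} {n : ℕ}
    (h : ∀ P : Finset (Set V), IsGDAPartition G P → P.card ≤ n) : psiG G ≤ n :=
  csSup_le' fun _ ⟨P, hP, hcard⟩ => hcard ▸ h P hP

theorem degIn_top (S : Set V) (v : V) : degIn (⊤ : SimpleGraph V) S v = (S \ {v}).ncard :=
  congrArg Set.ncard (Set.ext fun _ => and_congr_right' ne_comm)

theorem isDominatingSet_top {S : Set V} (hS : S.Nonempty) :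
    IsDominatingSet (⊤ : SimpleGraph V) S := by
  obtain ⟨u, hu⟩ := hS
  exact fun v hv => ⟨u, hu, (ne_of_mem_of_not_mem hu hv).symm⟩

variable [Finite V]

theorem IsGDAPartition.sum_ncard_s1 {G : SimpleGraph V} {P : Finset (Set V)}
    (hP : IsGDAPartition G P) : ∑ S ∈ P, S.ncard = Nat.card V := by
  rw [← Set.ncard_univ, ← hP.2.1, Set.sUnion_eq_biUnion,
    P.finite_toSet.ncard_biUnion (fun S _ => S.toFinite) hP.2.2, finsum_mem_coe_finset]

theorem IsGDAPartition.card_le_psiG {G : SimpleGraph V} {P : Finset (Set V)}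
    (hP : IsGDAPartition G P) : P.card ≤ psiG G :=
  le_csSup ((Set.toFinite {P | IsGDAPartition G P}).image Finset.card).bddAbove ⟨P, hP, rfl⟩

theorem degIn_top_compl_le_iff {S : Set V} {v : V} (hv : v ∈ S) :
    degIn (⊤ : SimpleGraph V) Sᶜ v ≤ degIn ⊤ S v + 1 ↔ Nat.card V ≤ 2 * S.ncard := by
  rw [degIn_top, degIn_top, Set.ncard_sdiff_singleton_add_one hv,
    Set.sdiff_singleton_eq_self (Set.notMem_compl_iff.mpr hv), ← Set.ncard_add_ncard_compl S]
  omega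

theorem isGlobalDefensiveAlliance_top_iff {S : Set V} :
    IsGlobalDefensiveAlliance (⊤ : SimpleGraph V) S ↔
      S.Nonempty ∧ Nat.card V ≤ 2 * S.ncard := by
  constructor
  · rintro ⟨⟨⟨v, hv⟩, hdeg⟩, -⟩
    exact ⟨⟨v, hv⟩, (degIn_top_compl_le_iff hv).mp (hdeg v hv)⟩
  · rintro ⟨hne, hcard⟩
    exact ⟨⟨hne, fun _ hv => (degIn_top_compl_le_iff hv).mpr hcard⟩, isDominatingSet_top hne⟩

theorem IsGDAPartition.even_card_of_top_of_card_eq_two {P : Finset (Set V)}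
    (hP : IsGDAPartition (⊤ : SimpleGraph V) P) (hcard : P.card = 2) : Even (Nat.card V) := by
  have hsum := hP.sum_ncard_s1
  obtain ⟨A, B, hAB, rfl⟩ := Finset.card_eq_two.mp hcard
  have hA := (isGlobalDefensiveAlliance_top_iff.mp (hP.1 A (by simp))).2
  have hB := (isGlobalDefensiveAlliance_top_iff.mp (hP.1 B (by simp))).2
  rw [Finset.sum_pair hAB] at hsum
  exact ⟨A.ncard, by omega⟩

variable [Nonempty V]

theorem IsGDAPartition.card_le_two_of_top {P : Finset (Set V)}
    (hP : IsGDAPartition (⊤ : SimpleGraph V) P) : P.card ≤ 2 := by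
  refine Nat.le_of_mul_le_mul_right ?_ (Nat.card_pos (α := V))
  calc P.card * Nat.card V ≤ ∑ S ∈ P, 2 * S.ncard :=
        Finset.card_nsmul_le_sum _ _ _ fun S hS =>
          (isGlobalDefensiveAlliance_top_iff.mp (hP.1 S hS)).2
    _ = 2 * Nat.card V := by rw [← Finset.mul_sum, hP.sum_ncard_s1]

theorem exists_isGDAPartition_top_card_eq_two (h : Even (Nat.card V)) :
    ∃ P : Finset (Set V), IsGDAPartition (⊤ : SimpleGraph V) P ∧ P.card = 2 := by
  obtain ⟨k, hk⟩ := h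
  obtain ⟨S, -, hS⟩ := Set.exists_subset_card_eq (s := (Set.univ : Set V)) (n := k)
    (by rw [Set.ncard_univ]; omega)
  have hpos : 0 < Nat.card V := Nat.card_pos
  have hcompl := Set.ncard_add_ncard_compl S
  have hhalf : ∀ T : Set V, T.ncard = k → IsGlobalDefensiveAlliance ⊤ T := fun T hT =>
    isGlobalDefensiveAlliance_top_iff.mpr
      ⟨Set.nonempty_of_ncard_ne_zero (by omega), by omega⟩
  exact ⟨{S, Sᶜ}, isGDAPartition_pair_compl (hhalf S hS) (hhalf Sᶜ (by omega)),
    Finset.card_pair ne_compl_self⟩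

theorem psiG_top_le_two : psiG (⊤ : SimpleGraph V) ≤ 2 :=
  psiG_le fun _ hP => hP.card_le_two_of_top

theorem partitionableGDA_top_iff : PartitionableGDA (⊤ : SimpleGraph V) ↔ Even (Nat.card V) := by
  constructor
  · contrapose
    intro hodd
    have hle : psiG (⊤ : SimpleGraph V) ≤ 1 := psiG_le fun P hP =>
      Nat.le_of_lt_succ <| hP.card_le_two_of_top.lt_of_ne fun hcard =>
        hodd (hP.even_card_of_top_of_card_eq_two hcard)
    exact (Nat.lt_succ_of_le hle).not_ge
  · intro heven
    obtain ⟨P, hP, hcard⟩ := exists_isGDAPartition_top_card_eq_two heven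
    exact hcard.ge.trans hP.card_le_psiG

end Graph

section Ring

variable {R : Type*} [CommRing R]

theorem card_ZDV_add_one [Nontrivial R] (h : (zeroDivisorSet R).Finite) :
    Nat.card (ZDV R) + 1 = (zeroDivisorSet R).ncard := by
  have hzero : (0 : R) ∈ zeroDivisorSet R := ⟨1, one_ne_zero, zero_mul 1⟩
  have hvertices : {x : R | x ≠ 0 ∧ x ∈ zeroDivisorSet R} = zeroDivisorSet R \ {0} :=
    Set.ext fun _ => and_comm
  rw [← Set.ncard_sdiff_singleton_add_one hzero h, ← hvertices]
  rfl

theorem zdGraph_eq_top (h : ∀ x ∈ zeroDivisorSet R, ∀ y ∈ zeroDivisorSet R, x * y = 0) :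
    zdGraph R = ⊤ := by
  ext a b
  exact and_iff_left (h a a.2.2 b b.2.2)

theorem zeroDivisorSet_eq_maximalIdeal [IsLocalRing R] [IsArtinianRing R] :
    zeroDivisorSet R = IsLocalRing.maximalIdeal R := by
  ext x
  rw [SetLike.mem_coe, IsLocalRing.mem_maximalIdeal, mem_nonunits_iff,
    IsArtinianRing.isUnit_iff_mem_nonZeroDivisors, notMem_nonZeroDivisors_iff_left]
  exact exists_congr fun _ => and_comm

theorem mul_eq_zero_of_mem_of_sq_eq_bot {I : Ideal R} (hI : I ^ 2 = ⊥) {x y : R}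
    (hx : x ∈ I) (hy : y ∈ I) : x * y = 0 := by
  rw [← Ideal.mem_bot, ← hI, pow_two]
  exact Ideal.mul_mem_mul hx hy

end Ring

/-- For a finite local commutative ring whose maximal ideal `M` is nilpotent
of index 2: if `|M|` is odd then `Γ(R)` is partitionable into global defensive alliances
with `ψ_g(Γ(R)) = 2`; if `|M|` is even then it is not partitionable. -/
theorem stmt1 (R : Type*) [CommRing R] [IsLocalRing R] [Finite R]
    (h1 : IsLocalRing.maximalIdeal R ≠ ⊥)
    (h2 : IsLocalRing.maximalIdeal R ^ 2 = ⊥) :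
    (Odd (Nat.card (IsLocalRing.maximalIdeal R)) →
      PartitionableGDA (zdGraph R) ∧ psiG (zdGraph R) = 2) ∧
    (Even (Nat.card (IsLocalRing.maximalIdeal R)) →
      ¬ PartitionableGDA (zdGraph R)) := by
  have hZ : zeroDivisorSet R = IsLocalRing.maximalIdeal R := zeroDivisorSet_eq_maximalIdeal
  have hcomplete : zdGraph R = ⊤ := zdGraph_eq_top fun x hx y hy =>
    mul_eq_zero_of_mem_of_sq_eq_bot h2 (hZ.subset hx) (hZ.subset hy)
  have hcard : Nat.card (IsLocalRing.maximalIdeal R) = Nat.card (ZDV R) + 1 := by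
    rw [card_ZDV_add_one (Set.toFinite _), hZ]
    rfl
  have hne : Nonempty (ZDV R) := by
    obtain ⟨x, hx, hx0⟩ := Submodule.exists_mem_ne_zero_of_ne_bot h1
    exact ⟨⟨x, hx0, hZ.superset hx⟩⟩
  rw [hcomplete, hcard, Nat.odd_add_one, Nat.not_odd_iff_even, Nat.even_add_one,
    partitionableGDA_top_iff]
  exact ⟨fun heven => ⟨heven, psiG_top_le_two.antisymm (partitionableGDA_top_iff.mpr heven)⟩, id⟩
end

section
/- Let F be a finite field. Then Γ(ℤ₂ × F) is partitionable into global defensive alliances if and only if F is isomorphic to ℤ₂ (equivalently, |F| = 2). -/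
open Classical

/-!
If `G` is finite, a union of global defensive alliances is again one, so `G` is partitionable iff
some set and its complement are both global defensive alliances. In a star, the part avoiding the
centre must contain every leaf, as a leaf can only be dominated by the centre. The other part is
then the centre alone, whose defence condition allows at most one leaf: a star is partitionable
iff it has two vertices. Finally `Γ(ℤ₂ × F)` is a star with `|F|` vertices, its centre being
`(1, 0)` and its leaves the `(0, u)` with `u ≠ 0`.
-/

section Graph

variable {V : Type*} [Finite V] {G : SimpleGraph V}

lemma degIn_mono {S T : Set V} (hST : S ⊆ T) (v : V) : degIn G S v ≤ degIn G T v :=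
  Set.ncard_le_ncard fun _ hu ↦ ⟨hST hu.1, hu.2⟩

lemma IsGlobalDefensiveAlliance.sUnion {P : Set (Set V)} (hne : P.Nonempty)
    (hP : ∀ S ∈ P, IsGlobalDefensiveAlliance G S) : IsGlobalDefensiveAlliance G (⋃₀ P) := by
  obtain ⟨S₀, hS₀⟩ := hne
  refine ⟨⟨(hP S₀ hS₀).1.1.mono (Set.subset_sUnion_of_mem hS₀), ?_⟩, ?_⟩
  · rintro v ⟨S, hS, hvS⟩
    have hsub : S ⊆ ⋃₀ P := Set.subset_sUnion_of_mem hS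
    calc degIn G (⋃₀ P)ᶜ v ≤ degIn G Sᶜ v := degIn_mono (Set.compl_subset_compl.2 hsub) v
      _ ≤ degIn G S v + 1 := (hP S hS).1.2 v hvS
      _ ≤ degIn G (⋃₀ P) v + 1 := Nat.add_le_add_right (degIn_mono hsub v) 1
  · intro v hv
    obtain ⟨u, huS₀, hadj⟩ := (hP S₀ hS₀).2 v fun hvS₀ ↦ hv ⟨S₀, hS₀, hvS₀⟩
    exact ⟨u, ⟨S₀, hS₀, huS₀⟩, hadj⟩

lemma le_psiG_iff {n : ℕ} (hn : n ≠ 0) :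
    n ≤ psiG G ↔ ∃ P : Finset (Set V), IsGDAPartition G P ∧ n ≤ P.card := by
  have hbdd : BddAbove {m : ℕ | ∃ P : Finset (Set V), IsGDAPartition G P ∧ P.card = m} := by
    have := Fintype.ofFinite (Set V)
    refine ⟨Fintype.card (Set V), ?_⟩
    rintro _ ⟨P, -, rfl⟩
    exact P.card_le_univ
  refine ⟨fun h ↦ ?_, fun ⟨P, hP, hcard⟩ ↦ hcard.trans (le_csSup hbdd ⟨P, hP, rfl⟩)⟩
  have hne : {m : ℕ | ∃ P : Finset (Set V), IsGDAPartition G P ∧ P.card = m}.Nonempty :=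
    Set.nonempty_iff_ne_empty.2 fun hempty ↦ hn <| by simpa [psiG, hempty] using h
  obtain ⟨P, hP, hcard⟩ := Nat.sSup_mem hne hbdd
  exact ⟨P, hP, h.trans hcard.ge⟩

lemma partitionableGDA_iff_exists_compl : PartitionableGDA G ↔
    ∃ S : Set V, IsGlobalDefensiveAlliance G S ∧ IsGlobalDefensiveAlliance G Sᶜ := by
  rw [PartitionableGDA, le_psiG_iff two_ne_zero]
  constructor
  · rintro ⟨P, ⟨hgda, hcover, hdisj⟩, hcard⟩
    obtain ⟨S, hS, T, hT, hST⟩ := Finset.one_lt_card.1 hcard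
    have hdisjoint : Disjoint S (⋃₀ ((P : Set (Set V)) \ {S})) :=
      Set.disjoint_sUnion_right.2 fun U hU ↦ hdisj hS hU.1 (Ne.symm hU.2)
    have hunion : S ∪ ⋃₀ ((P : Set (Set V)) \ {S}) = Set.univ := by
      rw [← Set.sUnion_insert, Set.insert_sdiff_singleton, Set.insert_eq_of_mem hS, hcover]
    have hcompl : Sᶜ = ⋃₀ ((P : Set (Set V)) \ {S}) :=
      IsCompl.compl_eq ⟨hdisjoint, codisjoint_iff.2 hunion⟩
    exact ⟨S, hgda S hS, hcompl ▸ .sUnion ⟨T, hT, hST.symm⟩ fun U hU ↦ hgda U hU.1⟩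
  · rintro ⟨S, hS, hSc⟩
    have hne : S ≠ Sᶜ := disjoint_compl_right.ne hS.1.1.ne_empty
    refine ⟨{S, Sᶜ}, ⟨by simp [hS, hSc], by simp, ?_⟩, (Finset.card_pair hne).ge⟩
    rw [Finset.coe_pair, Set.pairwise_pair_of_symm]
    exact fun _ ↦ disjoint_compl_right

end Graph

section Star

open SimpleGraph

variable {V : Type*} {c : V}

lemma IsDominatingSet.eq_compl_center_of_starGraph {S : Set V}
    (hS : IsDominatingSet (starGraph c) S) (hc : c ∉ S) : S = {c}ᶜ := by
  refine Set.Subset.antisymm (Set.subset_compl_singleton_iff.2 hc) fun v hv ↦ ?_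
  by_contra hvS
  obtain ⟨u, hu, hadj⟩ := hS v hvS
  obtain rfl : u = c := (starGraph_adj.1 hadj).2.resolve_left hv
  exact hc hu

lemma isGlobalDefensiveAlliance_starGraph_compl_center :
    IsGlobalDefensiveAlliance (starGraph c) {c}ᶜ ↔ Nontrivial V := by
  refine ⟨fun h ↦ ?_, fun _ ↦ ⟨⟨?_, ?_⟩, ?_⟩⟩
  · obtain ⟨v, hv⟩ := h.1.1
    exact ⟨v, c, hv⟩
  · exact exists_ne c
  · intro v _
    calc degIn (starGraph c) {c}ᶜᶜ v ≤ ({c} : Set V).ncard :=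
          Set.ncard_le_ncard fun u hu ↦ compl_compl ({c} : Set V) ▸ hu.1
      _ = 1 := Set.ncard_singleton c
      _ ≤ degIn (starGraph c) {c}ᶜ v + 1 := Nat.le_add_left 1 _
  · intro v hv
    obtain rfl : v = c := not_not.1 hv
    obtain ⟨u, hu⟩ := exists_ne v
    exact ⟨u, hu, starGraph_center_adj hu.symm⟩

variable [Finite V]

lemma isGlobalDefensiveAlliance_starGraph_center :
    IsGlobalDefensiveAlliance (starGraph c) {c} ↔ Nat.card V ≤ 2 := by
  have hdom : IsDominatingSet (starGraph c) {c} :=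
    fun v hv ↦ ⟨c, rfl, starGraph_center_adj' (Ne.symm hv)⟩
  have hin : degIn (starGraph c) {c} c = 0 := by
    have : {u | u ∈ ({c} : Set V) ∧ (starGraph c).Adj c u} = ∅ := by
      ext u; simp [eq_comm]
    rw [degIn, this, Set.ncard_empty]
  have hout : degIn (starGraph c) {c}ᶜ c = Nat.card V - 1 := by
    have : {u | u ∈ ({c}ᶜ : Set V) ∧ (starGraph c).Adj c u} = {c}ᶜ := by
      ext u; simp [eq_comm]
    rw [degIn, this, Set.ncard_compl, Set.ncard_singleton]
  simp [IsGlobalDefensiveAlliance, IsDefensiveAlliance, hdom, hin, hout]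

lemma partitionableGDA_starGraph_iff : PartitionableGDA (starGraph c) ↔ Nat.card V = 2 := by
  have hsplit : PartitionableGDA (starGraph c) ↔
      IsGlobalDefensiveAlliance (starGraph c) {c} ∧
        IsGlobalDefensiveAlliance (starGraph c) {c}ᶜ := by
    rw [partitionableGDA_iff_exists_compl]
    refine ⟨fun ⟨S, hS, hSc⟩ ↦ ?_, fun h ↦ ⟨{c}, h⟩⟩
    wlog hc : c ∈ S generalizing S
    · exact this Sᶜ hSc ((compl_compl S).symm ▸ hS) hc
    obtain rfl : S = {c} := compl_injective (hSc.2.eq_compl_center_of_starGraph (not_not.2 hc))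
    exact ⟨hS, hSc⟩
  rw [hsplit, isGlobalDefensiveAlliance_starGraph_center,
    isGlobalDefensiveAlliance_starGraph_compl_center, ← Finite.one_lt_card_iff_nontrivial]
  omega

end Star

section Ring

variable {R S : Type*} [CommRing R] [IsDomain R] [CommRing S] [IsDomain S]

lemma prod_ne_zero_and_exists_mul_eq_zero_iff {x : R × S} :
    (x ≠ 0 ∧ ∃ y, y ≠ 0 ∧ x * y = 0) ↔ (x.1 = 0 ↔ x.2 ≠ 0) := by
  obtain ⟨r, s⟩ := x
  constructor
  · rintro ⟨hx, ⟨r', s'⟩, hy, hxy⟩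
    simp only [Prod.mk_mul_mk, Prod.mk_eq_zero, mul_eq_zero, ne_eq] at hx hy hxy ⊢
    tauto
  · intro h
    by_cases hr : r = 0
    · exact ⟨fun hx ↦ h.1 hr (congrArg Prod.snd hx), (1, 0), by simp, by simp [hr]⟩
    · have hs : s = 0 := by tauto
      exact ⟨fun hx ↦ hr (congrArg Prod.fst hx), (0, 1), by simp, by simp [hs]⟩

lemma zdGraph_prod_adj {x y : ZDV (R × S)} :
    (zdGraph (R × S)).Adj x y ↔ (x.1.2 = 0 ↔ y.1.2 ≠ 0) := by
  have hx := prod_ne_zero_and_exists_mul_eq_zero_iff.1 x.2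
  have hy := prod_ne_zero_and_exists_mul_eq_zero_iff.1 y.2
  have hne : (x.1.2 = 0 ↔ y.1.2 ≠ 0) → x ≠ y := by
    rintro h rfl
    tauto
  simp only [zdGraph, Prod.ext_iff, Prod.fst_mul, Prod.snd_mul, Prod.fst_zero, Prod.snd_zero,
    mul_eq_zero]
  tauto

variable (R) in
/-- The vertices of `Γ(ℤ₂ × R)`, for a domain `R`, parametrized by their second coordinate: `0`
corresponds to the centre `(1, 0)` of the star and `u ≠ 0` to the leaf `(0, u)`. -/
noncomputable def zdvZModTwoProdEquiv : ZDV (ZMod 2 × R) ≃ R where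
  toFun x := x.1.2
  invFun r := ⟨(if r = 0 then 1 else 0, r), prod_ne_zero_and_exists_mul_eq_zero_iff.2 (by simp)⟩
  left_inv := by
    rintro ⟨⟨a, r⟩, hx⟩
    have har : a = 0 ↔ r ≠ 0 := prod_ne_zero_and_exists_mul_eq_zero_iff.1 hx
    by_cases hr : r = 0
    · have ha : a = 1 := Fin.eq_one_of_ne_zero a (by tauto)
      simp [hr, ha]
    · simp [hr, har.2 hr]
  right_inv _ := rfl

lemma zdGraph_zmod_two_prod_eq_starGraph :
    zdGraph (ZMod 2 × R) = SimpleGraph.starGraph ((zdvZModTwoProdEquiv R).symm 0) := by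
  ext x y
  have hxy : x ≠ y ↔ x.1.2 ≠ y.1.2 := (zdvZModTwoProdEquiv R).injective.ne_iff.symm
  have hcenter (z : ZDV (ZMod 2 × R)) : z = (zdvZModTwoProdEquiv R).symm 0 ↔ z.1.2 = 0 :=
    Equiv.eq_symm_apply _
  rw [zdGraph_prod_adj, SimpleGraph.starGraph_adj, hcenter, hcenter, hxy]
  grind

end Ring

lemma nonempty_ringEquiv_zmod_iff {R : Type*} [Ring R] {p : ℕ} (hp : p.Prime) :
    Nonempty (R ≃+* ZMod p) ↔ Nat.card R = p := by
  refine ⟨fun ⟨e⟩ ↦ (Nat.card_congr e.toEquiv).trans (Nat.card_zmod p), fun h ↦ ?_⟩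
  have : Finite R := Nat.finite_of_card_ne_zero (h ▸ hp.ne_zero)
  have := Fintype.ofFinite R
  exact ⟨(ZMod.ringEquivOfPrime R hp (Nat.card_eq_fintype_card.symm.trans h)).symm⟩

/-- For a finite field `F`, `Γ(ℤ₂ × F)` is partitionable into global
defensive alliances iff `F ≅ ℤ₂`. -/
theorem stmt4 (F : Type*) [Field F] [Finite F] :
    PartitionableGDA (zdGraph (ZMod 2 × F)) ↔ Nonempty (F ≃+* ZMod 2) := by
  rw [zdGraph_zmod_two_prod_eq_starGraph, partitionableGDA_starGraph_iff,
    Nat.card_congr (zdvZModTwoProdEquiv F), nonempty_ringEquiv_zmod_iff Nat.prime_two]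
end

section
/- Let p and q be prime numbers with p ≥ 3 and q ≥ 3. Then Γ(ℤ_p × ℤ_q) is partitionable into global defensive alliances and ψ_g(Γ(ℤ_p × ℤ_q)) = 2. -/
open Classical

/-!
`Γ(R × S)` is complete bipartite for domains `R` and `S`, its parts being the nonzero elements of
`R` and those of `S`. In a complete bipartite graph whose parts `A` and `B` have at least two
vertices each, a defensive alliance has to meet both parts, and its vertices in `A` force it to
contain about half of `B`. If `|B|` is even this means at least half of `B`, so at most two
alliances are disjoint; conversely, halving `A` (up to one vertex) and `B` yields two global
defensive alliances.
-/

section Set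

variable {α : Type*}

lemma ncard_inter_add_ncard_compl_inter (S : Set α) {T : Set α} (hT : T.Finite) :
    (S ∩ T).ncard + (Sᶜ ∩ T).ncard = T.ncard := by
  rw [Set.inter_comm S, Set.inter_comm Sᶜ, ← Set.sdiff_eq]
  exact Set.ncard_inter_add_ncard_sdiff_eq_ncard T S hT

lemma exists_ncard_inter_eq_half (A : Set α) :
    ∃ S : Set α, (S ∩ A).ncard = A.ncard / 2 ∧ (S ∩ Aᶜ).ncard = Aᶜ.ncard / 2 := by
  obtain ⟨A', hA', hA'card⟩ := Set.exists_subset_card_eq (Nat.div_le_self A.ncard 2)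
  obtain ⟨B', hB', hB'card⟩ := Set.exists_subset_card_eq (Nat.div_le_self Aᶜ.ncard 2)
  have hinter : (A' ∪ B') ∩ A = A' := by grind
  have hinter_compl : (A' ∪ B') ∩ Aᶜ = B' := by grind
  exact ⟨A' ∪ B', by rw [hinter, hA'card], by rw [hinter_compl, hB'card]⟩

lemma ncard_setOf_ne (a : α) [Finite α] : {x | x ≠ a}.ncard = Nat.card α - 1 := by
  rw [← Set.compl_singleton_eq, Set.ncard_compl, Set.ncard_singleton]

end Set

section Partition

variable {V : Type*} {G : SimpleGraph V}

namespace IsGDAPartition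

lemma pair_compl {S : Set V} (hS : IsGlobalDefensiveAlliance G S)
    (hSc : IsGlobalDefensiveAlliance G Sᶜ) : IsGDAPartition G {S, Sᶜ} := by
  refine ⟨by simp [hS, hSc], by simp, ?_⟩
  rw [Finset.coe_pair]
  exact Set.pairwise_pair.2 fun _ ↦ ⟨disjoint_compl_right, disjoint_compl_left⟩

lemma sum_ncard_inter {P : Finset (Set V)} (hP : IsGDAPartition G P) {T : Set V}
    (hT : T.Finite) : ∑ S ∈ P, (S ∩ T).ncard = T.ncard := by
  obtain ⟨-, hcover, hdisj⟩ := hP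
  have hunion : ⋃ S ∈ (P : Set (Set V)), S ∩ T = T := by
    rw [← Set.iUnion₂_inter, ← Set.sUnion_eq_biUnion, hcover, Set.univ_inter]
  have hdisj_inter : (P : Set (Set V)).PairwiseDisjoint (· ∩ T) := fun S hS S' hS' hne ↦
    (hdisj hS hS' hne).mono Set.inter_subset_left Set.inter_subset_left
  have hncard := P.finite_toSet.ncard_biUnion (fun S _ ↦ hT.inter_of_right S) hdisj_inter
  rwa [hunion, finsum_mem_coe_finset, eq_comm] at hncard

lemma card_le_of_ncard_le_mul {P : Finset (Set V)} (hP : IsGDAPartition G P) {T : Set V}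
    (hT : T.Finite) (hT' : T.Nonempty) {k : ℕ} (hk : ∀ S ∈ P, T.ncard ≤ k * (S ∩ T).ncard) :
    P.card ≤ k := by
  refine Nat.le_of_mul_le_mul_right ?_ ((Set.ncard_pos hT).2 hT')
  calc P.card * T.ncard
      ≤ ∑ S ∈ P, k * (S ∩ T).ncard := by
        simpa only [smul_eq_mul] using Finset.card_nsmul_le_sum P _ _ hk
    _ = k * T.ncard := by rw [← Finset.mul_sum, hP.sum_ncard_inter hT]

end IsGDAPartition

end Partition

/-- `G` is the complete bipartite graph with parts `A` and `Aᶜ`, encoded by its edges being the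
pairs with exactly one endpoint in `A`. Either part may be empty. -/
def IsCompleteBipartiteWith {V : Type*} (G : SimpleGraph V) (A : Set V) : Prop :=
  ∀ u v, G.Adj u v ↔ (u ∈ A ↔ v ∉ A)

namespace IsCompleteBipartiteWith

variable {V : Type*} {G : SimpleGraph V} {A S : Set V}

lemma compl (h : IsCompleteBipartiteWith G A) : IsCompleteBipartiteWith G Aᶜ := fun u v ↦ by
  rw [h u v, Set.mem_compl_iff, Set.mem_compl_iff, not_iff_not]

lemma degIn_of_mem (h : IsCompleteBipartiteWith G A) (S : Set V) {v : V} (hv : v ∈ A) :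
    degIn G S v = (S ∩ Aᶜ).ncard := by
  simp only [degIn, h v, hv, true_iff]
  rfl

lemma inter_nonempty_of_isDefensiveAlliance (h : IsCompleteBipartiteWith G A)
    (hA : 2 ≤ A.ncard) (hS : IsDefensiveAlliance G S) : (S ∩ A).Nonempty := by
  obtain ⟨⟨x, hxS⟩, hdeg⟩ := hS
  by_contra hempty
  have hinter : S ∩ A = ∅ := Set.not_nonempty_iff_eq_empty.1 hempty
  have hsub : A ⊆ Sᶜ := (Set.disjoint_iff_inter_eq_empty.2 hinter).subset_compl_left
  have hxA : x ∈ Aᶜ := fun hx ↦ hempty ⟨x, hxS, hx⟩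
  have hx := hdeg x hxS
  rw [h.compl.degIn_of_mem _ hxA, h.compl.degIn_of_mem _ hxA, compl_compl, hinter,
    Set.inter_eq_right.2 hsub, Set.ncard_empty] at hx
  omega

lemma ncard_compl_le_of_isDefensiveAlliance (h : IsCompleteBipartiteWith G A)
    (hfin : Aᶜ.Finite) (hS : IsDefensiveAlliance G S) (hSA : (S ∩ A).Nonempty) :
    Aᶜ.ncard ≤ 2 * (S ∩ Aᶜ).ncard + 1 := by
  obtain ⟨a, haS, haA⟩ := hSA
  have ha := hS.2 a haS
  rw [h.degIn_of_mem _ haA, h.degIn_of_mem _ haA] at ha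
  have hsplit := ncard_inter_add_ncard_compl_inter S hfin
  omega

lemma isGlobalDefensiveAlliance (h : IsCompleteBipartiteWith G A)
    (hSA : (S ∩ A).Nonempty) (hSAc : (S ∩ Aᶜ).Nonempty)
    (hA : (Sᶜ ∩ A).ncard ≤ (S ∩ A).ncard + 1)
    (hAc : (Sᶜ ∩ Aᶜ).ncard ≤ (S ∩ Aᶜ).ncard + 1) :
    IsGlobalDefensiveAlliance G S := by
  obtain ⟨a, haS, haA⟩ := hSA
  obtain ⟨b, hbS, hbA⟩ := hSAc
  refine ⟨⟨⟨a, haS⟩, fun v _ ↦ ?_⟩, fun v _ ↦ ?_⟩ <;> by_cases hv : v ∈ A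
  · rwa [h.degIn_of_mem _ hv, h.degIn_of_mem _ hv]
  · rwa [h.compl.degIn_of_mem _ hv, h.compl.degIn_of_mem _ hv, compl_compl]
  · exact ⟨b, hbS, (h v b).2 (iff_of_true hv hbA)⟩
  · exact ⟨a, haS, (h v a).2 (iff_of_false hv (not_not_intro haA))⟩

lemma exists_isGDAPartition_card_eq_two (h : IsCompleteBipartiteWith G A)
    (hA : 2 ≤ A.ncard) (hAc : 2 ≤ Aᶜ.ncard) :
    ∃ P : Finset (Set V), IsGDAPartition G P ∧ P.card = 2 := by
  obtain ⟨S, hSA, hSAc⟩ := exists_ncard_inter_eq_half A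
  have hfinA : A.Finite := Set.finite_of_ncard_pos (by omega)
  have hfinAc : Aᶜ.Finite := Set.finite_of_ncard_pos (by omega)
  have hScA := ncard_inter_add_ncard_compl_inter S hfinA
  have hScAc := ncard_inter_add_ncard_compl_inter S hfinAc
  have hS : IsGlobalDefensiveAlliance G S :=
    h.isGlobalDefensiveAlliance (Set.nonempty_of_ncard_ne_zero (by omega))
      (Set.nonempty_of_ncard_ne_zero (by omega)) (by omega) (by omega)
  have hSc : IsGlobalDefensiveAlliance G Sᶜ := by
    refine h.isGlobalDefensiveAlliance (Set.nonempty_of_ncard_ne_zero (by omega))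
      (Set.nonempty_of_ncard_ne_zero (by omega)) ?_ ?_ <;> rw [compl_compl] <;> omega
  have : Nonempty V := ⟨hS.1.1.some⟩
  exact ⟨{S, Sᶜ}, .pair_compl hS hSc, Finset.card_pair ne_compl_self⟩

lemma psiG_eq_two (h : IsCompleteBipartiteWith G A) (hA : 2 ≤ A.ncard)
    (hAc : 2 ≤ Aᶜ.ncard) (heven : Even Aᶜ.ncard) : psiG G = 2 := by
  have hfin : Aᶜ.Finite := Set.finite_of_ncard_pos (by omega)
  refine IsGreatest.csSup_eq ⟨h.exists_isGDAPartition_card_eq_two hA hAc, ?_⟩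
  rintro n ⟨P, hP, rfl⟩
  refine hP.card_le_of_ncard_le_mul hfin (Set.nonempty_of_ncard_ne_zero (by omega)) fun S hS ↦ ?_
  have halliance : IsDefensiveAlliance G S := (hP.1 S hS).1
  have hhalf := h.ncard_compl_le_of_isDefensiveAlliance hfin halliance
    (h.inter_nonempty_of_isDefensiveAlliance hA halliance)
  obtain ⟨k, hk⟩ := heven
  omega

end IsCompleteBipartiteWith

section ProductRing

variable {R S : Type*} [CommRing R] [CommRing S]

lemma ZDV.fst_ne_zero_iff [NoZeroDivisors R] [NoZeroDivisors S] (v : ZDV (R × S)) :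
    v.1.1 ≠ 0 ↔ v.1.2 = 0 := by
  obtain ⟨⟨r, s⟩, hv, ⟨r', s'⟩, hw, hmul⟩ := v
  simp only [ne_eq, Prod.mk_eq_zero, Prod.mk_mul_mk, mul_eq_zero] at hv hw hmul ⊢
  tauto

lemma isCompleteBipartiteWith_zdGraph_prod [NoZeroDivisors R] [NoZeroDivisors S] :
    IsCompleteBipartiteWith (zdGraph (R × S)) {v | v.1.1 = 0} := fun u v ↦ by
  have hu := u.fst_ne_zero_iff
  have hv := v.fst_ne_zero_iff
  have hmul : u.1 * v.1 = 0 ↔ (u.1.1 = 0 ∨ v.1.1 = 0) ∧ (u.1.2 = 0 ∨ v.1.2 = 0) := by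
    simp [Prod.ext_iff]
  have hne : u = v → (u.1.1 = 0 ↔ v.1.1 = 0) := by
    rintro rfl
    rfl
  change u ≠ v ∧ u.1 * v.1 = 0 ↔ (u.1.1 = 0 ↔ ¬v.1.1 = 0)
  tauto

lemma ncard_zdv_fst_eq_zero [Nontrivial R] [Finite S] :
    {v : ZDV (R × S) | v.1.1 = 0}.ncard = Nat.card S - 1 := by
  rw [← ncard_setOf_ne (0 : S)]
  refine Set.BijOn.ncard_eq (f := fun v ↦ v.1.2) ⟨?_, ?_, ?_⟩
  · exact fun v hv hv' ↦ v.2.1 (Prod.ext hv hv')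
  · exact fun _ hu _ hv huv ↦ Subtype.ext (Prod.ext (hu.trans hv.symm) huv)
  · exact fun s hs ↦ ⟨⟨(0, s), by simpa using hs, (1, 0), by simp, by simp⟩, rfl, rfl⟩

lemma ncard_zdv_snd_eq_zero [Nontrivial S] [Finite R] :
    {v : ZDV (R × S) | v.1.2 = 0}.ncard = Nat.card R - 1 := by
  rw [← ncard_setOf_ne (0 : R)]
  refine Set.BijOn.ncard_eq (f := fun v ↦ v.1.1) ⟨?_, ?_, ?_⟩
  · exact fun v hv hv' ↦ v.2.1 (Prod.ext hv' hv)
  · exact fun _ hu _ hv huv ↦ Subtype.ext (Prod.ext huv (hu.trans hv.symm))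
  · exact fun r hr ↦ ⟨⟨(r, 0), by simpa using hr, (0, 1), by simp, by simp⟩, rfl, rfl⟩

end ProductRing

theorem stmt9_general {R S : Type*} [CommRing R] [CommRing S] [IsDomain R] [IsDomain S]
    (hR : Odd (Nat.card R)) (hS : 3 ≤ Nat.card S) :
    PartitionableGDA (zdGraph (R × S)) ∧ psiG (zdGraph (R × S)) = 2 := by
  have : Finite R := Nat.finite_of_card_ne_zero hR.pos.ne'
  have : Finite S := Nat.finite_of_card_ne_zero (by omega)
  have hfst : {v : ZDV (R × S) | v.1.1 = 0}.ncard = Nat.card S - 1 := ncard_zdv_fst_eq_zero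
  have hsnd : {v : ZDV (R × S) | v.1.1 = 0}ᶜ.ncard = Nat.card R - 1 := by
    rw [← ncard_zdv_snd_eq_zero (S := S)]
    exact congrArg Set.ncard (Set.ext ZDV.fst_ne_zero_iff)
  have hR1 : 1 < Nat.card R := Finite.one_lt_card
  obtain ⟨k, hk⟩ := hR
  have hpsi : psiG (zdGraph (R × S)) = 2 :=
    isCompleteBipartiteWith_zdGraph_prod.psiG_eq_two (by omega) (by omega) ⟨k, by omega⟩
  exact ⟨hpsi.ge, hpsi⟩

/-- For primes `p, q ≥ 3`, `Γ(ℤ_p × ℤ_q)` is partitionable into global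
defensive alliances and `ψ_g(Γ(ℤ_p × ℤ_q)) = 2`. -/
theorem stmt9 (p q : ℕ) (hp : p.Prime) (hq : q.Prime) (hp3 : 3 ≤ p) (hq3 : 3 ≤ q) :
    PartitionableGDA (zdGraph (ZMod p × ZMod q)) ∧
    psiG (zdGraph (ZMod p × ZMod q)) = 2 := by
  have := Fact.mk hp
  have := Fact.mk hq
  exact stmt9_general (by simpa using hp.odd_of_ne_two (by omega)) (by simpa using hq3)
end
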